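/- If h : ℝ^m → ℝ is measurable with ∫ h²/f < ∞ and the weighted L² norm is preserved, i.e. ∫ (T h)(q)²/f(q) dq = ∫ h(q)²/f(q) dq, then h is a scalar multiple of the target density: there exists α ∈ ℝ such that h(q) = α·f(q) for Lebesgue-a.e. q ∈ ℝ^m. -/

import Mathlib

open MeasureTheory

/-!
In terms of the ratio `u = h / f`, the HMC operator is a Markov kernel `K` leaving the target
measure `f dq` invariant: `T h = f · K u`. By the law of total variance, the loss
`∫ u² f - ∫ (K u)² f` of squared norm is the integral over `q` of the variance of `u` under
`K q`. If it vanishes, `u` is almost surely constant under `K q` for almost every `q`, and a single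
such `q` whose kernel measure dominates Lebesgue measure makes `u` constant almost everywhere.
-/

open ProbabilityTheory
open scoped ENNReal

section WithDensity

variable {α β : Type*} {mα : MeasurableSpace α} {mβ : MeasurableSpace β} {μ : Measure α}
  {E : Type*} [NormedAddCommGroup E] [NormedSpace ℝ E]

theorem measurePreserving_withDensity_comp {ν : Measure β} {φ : α → β}
    (hφ : MeasurePreserving φ μ ν) {w : β → ℝ≥0∞} (hw : Measurable w) :
    MeasurePreserving φ (μ.withDensity (w ∘ φ)) (ν.withDensity w) := by
  refine ⟨hφ.measurable, Measure.ext fun s hs => ?_⟩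
  rw [Measure.map_apply hφ.measurable hs, withDensity_apply _ (hφ.measurable hs),
    withDensity_apply _ hs]
  exact hφ.setLIntegral_comp_preimage hs hw

theorem isProbabilityMeasure_withDensity_ofReal {g : α → ℝ} (hg_nonneg : 0 ≤ᵐ[μ] g)
    (hg_int : ∫ x, g x ∂μ = 1) :
    IsProbabilityMeasure (μ.withDensity fun x => ENNReal.ofReal (g x)) := by
  have hg : Integrable g μ := Integrable.of_integral_ne_zero (by simp [hg_int])
  refine ⟨?_⟩
  rw [withDensity_apply _ MeasurableSet.univ, Measure.restrict_univ,
    ← ofReal_integral_eq_lintegral_ofReal hg hg_nonneg, hg_int, ENNReal.ofReal_one]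

theorem integral_withDensity_ofReal {g : α → ℝ} (hg : AEMeasurable g μ)
    (hg_nonneg : 0 ≤ᵐ[μ] g) (k : α → E) :
    ∫ x, k x ∂μ.withDensity (fun x => ENNReal.ofReal (g x)) = ∫ x, g x • k x ∂μ := by
  rw [integral_withDensity_eq_integral_toReal_smul₀ hg.ennreal_ofReal (by simp)]
  refine integral_congr_ae (hg_nonneg.mono fun x hx => ?_)
  simp only [ENNReal.toReal_ofReal hx]

theorem integrable_withDensity_ofReal_iff {g : α → ℝ} (hg : AEMeasurable g μ)
    (hg_nonneg : 0 ≤ᵐ[μ] g) (k : α → E) :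
    Integrable k (μ.withDensity fun x => ENNReal.ofReal (g x)) ↔
      Integrable (fun x => g x • k x) μ := by
  rw [integrable_withDensity_iff_integrable_smul₀' hg.ennreal_ofReal (by simp)]
  refine integrable_congr (hg_nonneg.mono fun x hx => ?_)
  simp only [ENNReal.toReal_ofReal hx]

variable {f : α → ℝ}

theorem absolutelyContinuous_withDensity_ofReal (hf : AEMeasurable f μ)
    (hf_pos : ∀ᵐ x ∂μ, 0 < f x) : μ ≪ μ.withDensity fun x => ENNReal.ofReal (f x) :=
  withDensity_absolutelyContinuous' hf.ennreal_ofReal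
    (hf_pos.mono fun _ hx => (ENNReal.ofReal_pos.2 hx).ne')

theorem integral_sq_div_eq_integral_withDensity (hf : AEMeasurable f μ)
    (hf_pos : ∀ᵐ x ∂μ, 0 < f x) (k : α → ℝ) :
    ∫ x, k x ^ 2 / f x ∂μ =
      ∫ x, (k x / f x) ^ 2 ∂μ.withDensity (fun x => ENNReal.ofReal (f x)) := by
  rw [integral_withDensity_ofReal hf (hf_pos.mono fun _ hx => hx.le)]
  refine integral_congr_ae (hf_pos.mono fun x hx => ?_)
  simp only [smul_eq_mul]
  field_simp

theorem memLp_two_div_withDensity_iff (hf : AEMeasurable f μ) (hf_pos : ∀ᵐ x ∂μ, 0 < f x)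
    {k : α → ℝ} (hk : AEMeasurable k μ) :
    MemLp (fun x => k x / f x) 2 (μ.withDensity fun x => ENNReal.ofReal (f x)) ↔
      Integrable (fun x => k x ^ 2 / f x) μ := by
  rw [memLp_two_iff_integrable_sq ((hk.fun_div hf).aestronglyMeasurable.mono_ac
      (withDensity_absolutelyContinuous _ _)),
    integrable_withDensity_ofReal_iff hf (hf_pos.mono fun _ hx => hx.le)]
  refine integrable_congr (hf_pos.mono fun x hx => ?_)
  simp only [smul_eq_mul]
  field_simp

end WithDensity

section TotalVariance

variable {α β : Type*} {mα : MeasurableSpace α} {mβ : MeasurableSpace β} {μ : Measure α}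
  {κ : Kernel α β}

section BochnerIntegral

variable {E : Type*} [NormedAddCommGroup E] [NormedSpace ℝ E] {F : β → E}

theorem integrable_kernel_integral_of_integrable_comp (hF : Integrable F (κ ∘ₘ μ)) :
    Integrable (fun a => ∫ b, F b ∂κ a) μ := by
  rw [Measure.comp_eq_comp_const_apply] at hF
  simpa only [Kernel.const_apply] using hF.integral_comp

theorem integral_measure_comp (hF : Integrable F (κ ∘ₘ μ)) :
    ∫ b, F b ∂(κ ∘ₘ μ) = ∫ a, ∫ b, F b ∂κ a ∂μ := by
  rw [Measure.comp_eq_comp_const_apply] at hF ⊢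
  simpa only [Kernel.const_apply] using Kernel.integral_comp hF

theorem aestronglyMeasurable_kernel_integral_of_comp (hF : AEStronglyMeasurable F (κ ∘ₘ μ)) :
    AEStronglyMeasurable (fun a => ∫ b, F b ∂κ a) μ := by
  rw [Measure.comp_eq_comp_const_apply] at hF
  simpa only [Kernel.const_apply] using hF.integral_kernel_comp

end BochnerIntegral

variable {X : β → ℝ}

theorem ae_memLp_two_of_memLp_two_comp (hX : MemLp X 2 (κ ∘ₘ μ)) :
    ∀ᵐ a ∂μ, MemLp X 2 (κ a) := by
  have hX_meas : ∀ᵐ a ∂μ, AEStronglyMeasurable X (κ a) := by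
    filter_upwards [Measure.ae_ae_of_ae_comp hX.1.ae_eq_mk] with a ha
    exact ⟨_, hX.1.stronglyMeasurable_mk, ha⟩
  filter_upwards [hX_meas, Measure.ae_integrable_of_integrable_comp hX.integrable_sq]
    with a ha_meas ha_sq
  exact (memLp_two_iff_integrable_sq ha_meas).2 ha_sq

variable [IsMarkovKernel κ]

theorem ae_variance_kernel_eq_sub (hX : MemLp X 2 (κ ∘ₘ μ)) :
    ∀ᵐ a ∂μ, Var[X; κ a] = ∫ b, X b ^ 2 ∂κ a - (∫ b, X b ∂κ a) ^ 2 :=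
  (ae_memLp_two_of_memLp_two_comp hX).mono fun _ ha => variance_eq_sub ha

theorem integrable_sq_kernel_integral (hX : MemLp X 2 (κ ∘ₘ μ)) :
    Integrable (fun a => (∫ b, X b ∂κ a) ^ 2) μ := by
  refine (integrable_kernel_integral_of_integrable_comp hX.integrable_sq).mono'
    ((aestronglyMeasurable_kernel_integral_of_comp hX.1).pow 2) ?_
  filter_upwards [ae_variance_kernel_eq_sub hX] with a ha
  rw [Real.norm_of_nonneg (sq_nonneg _)]
  linarith [variance_nonneg X (κ a)]

theorem integrable_variance_kernel (hX : MemLp X 2 (κ ∘ₘ μ)) :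
    Integrable (fun a => Var[X; κ a]) μ :=
  ((integrable_kernel_integral_of_integrable_comp hX.integrable_sq).sub
    (integrable_sq_kernel_integral hX)).congr
    ((ae_variance_kernel_eq_sub hX).mono fun _ ha => ha.symm)

theorem integral_variance_kernel (hX : MemLp X 2 (κ ∘ₘ μ)) :
    ∫ a, Var[X; κ a] ∂μ = ∫ b, X b ^ 2 ∂(κ ∘ₘ μ) - ∫ a, (∫ b, X b ∂κ a) ^ 2 ∂μ := by
  rw [integral_congr_ae (ae_variance_kernel_eq_sub hX),
    integral_sub (integrable_kernel_integral_of_integrable_comp hX.integrable_sq)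
      (integrable_sq_kernel_integral hX),
    integral_measure_comp hX.integrable_sq]

theorem ae_ae_eq_kernel_integral_of_integral_sq_eq (hX : MemLp X 2 (κ ∘ₘ μ))
    (hnorm : ∫ a, (∫ b, X b ∂κ a) ^ 2 ∂μ = ∫ b, X b ^ 2 ∂(κ ∘ₘ μ)) :
    ∀ᵐ a ∂μ, X =ᵐ[κ a] fun _ => ∫ b, X b ∂κ a := by
  have hvar : (fun a => Var[X; κ a]) =ᵐ[μ] 0 := by
    rw [← integral_eq_zero_iff_of_nonneg (fun a => variance_nonneg X (κ a))
      (integrable_variance_kernel hX), integral_variance_kernel hX, hnorm, sub_self]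
  filter_upwards [hvar, ae_memLp_two_of_memLp_two_comp hX] with a ha_var ha_memLp
  exact ae_eq_integral_of_variance_eq_zero ha_memLp ha_var

theorem exists_ae_eq_const_of_invariant_of_integral_sq_eq {η : Kernel α α} [IsMarkovKernel η]
    (hη : η.Invariant μ) {u : α → ℝ} (hu : MemLp u 2 μ)
    (hnorm : ∫ a, (∫ b, u b ∂η a) ^ 2 ∂μ = ∫ a, u a ^ 2 ∂μ)
    (hac : ∃ᶠ a in ae μ, μ ≪ η a) : ∃ c : ℝ, ∀ᵐ a ∂μ, u a = c := by
  rw [← hη.def] at hu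
  have hconst := ae_ae_eq_kernel_integral_of_integral_sq_eq hu (by rwa [hη.def])
  obtain ⟨a, ha_ac, ha_const⟩ := (hac.and_eventually hconst).exists
  exact ⟨_, ha_ac.ae_le ha_const⟩

end TotalVariance

section HMC

variable {Q P : Type*} [MeasurableSpace Q] [MeasurableSpace P]

/-- The Hamiltonian Monte Carlo operator `T` for the momentum density `g` with respect to `ρ` and
the motion `R`, acting on functions of the position. -/
noncomputable def hmcOperator (ρ : Measure P) (g : P → ℝ) (R : Q × P → Q × P) (h : Q → ℝ)
    (q : Q) : ℝ :=
  ∫ p, h (R (q, p)).1 * g (R (q, p)).2 ∂ρ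

/-- The transition kernel of Hamiltonian Monte Carlo: draw a momentum from `ν`, apply the motion `R`
and keep the position. It is the zero kernel when `R` is not measurable. -/
noncomputable def hmcKernel (ν : Measure P) (R : Q × P → Q × P) : Kernel Q Q :=
  (Kernel.id ×ₖ Kernel.const Q ν).map fun z => (R z).1

section Kernel

variable {ν : Measure P} {R : Q × P → Q × P}

theorem hmcKernel_apply [SFinite ν] (hR : Measurable R) (q : Q) :
    hmcKernel ν R q = ν.map fun p => (R (q, p)).1 := by
  rw [hmcKernel, Kernel.map_apply _ hR.fst, Kernel.prod_apply, Kernel.id_apply,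
    Kernel.const_apply, Measure.dirac_prod, Measure.map_map hR.fst measurable_prodMk_left]
  rfl

theorem isMarkovKernel_hmcKernel [IsProbabilityMeasure ν] (hR : Measurable R) :
    IsMarkovKernel (hmcKernel ν R) :=
  Kernel.IsMarkovKernel.map _ hR.fst

theorem invariant_hmcKernel {π : Measure Q} [SFinite π] [IsProbabilityMeasure ν]
    (hR : MeasurePreserving R (π.prod ν) (π.prod ν)) : (hmcKernel ν R).Invariant π :=
  calc
    hmcKernel ν R ∘ₘ π = ((Kernel.id ×ₖ Kernel.const Q ν) ∘ₘ π).map fun z => (R z).1 :=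
      (Measure.map_comp π _ hR.measurable.fst).symm
    _ = (π.prod ν).map fun z => (R z).1 := by
      rw [← Measure.compProd_eq_comp_prod, Measure.compProd_const]
    _ = ((π.prod ν).map R).map Prod.fst := (Measure.map_map measurable_fst hR.measurable).symm
    _ = π := by rw [hR.map_eq]; exact Measure.fst_prod

end Kernel

variable {μ : Measure Q} {ρ : Measure P} [SFinite ρ] {f : Q → ℝ} {g : P → ℝ}
  {R : Q × P → Q × P}

theorem measurePreserving_prod_withDensity_of_mul_invariant (hf : Measurable f)
    (hf_pos : ∀ᵐ q ∂μ, 0 < f q) (hg : Measurable g)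
    (hR : MeasurePreserving R (μ.prod ρ) (μ.prod ρ))
    (hinv : ∀ᵐ z ∂μ.prod ρ, f (R z).1 * g (R z).2 = f z.1 * g z.2) :
    MeasurePreserving R
      ((μ.withDensity fun q => ENNReal.ofReal (f q)).prod
        (ρ.withDensity fun p => ENNReal.ofReal (g p)))
      ((μ.withDensity fun q => ENNReal.ofReal (f q)).prod
        (ρ.withDensity fun p => ENNReal.ofReal (g p))) := by
  let w : Q × P → ℝ≥0∞ := fun z => ENNReal.ofReal (f z.1) * ENNReal.ofReal (g z.2)
  have hw : Measurable w := by fun_prop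
  have hf_pos_fst : ∀ᵐ z ∂μ.prod ρ, 0 < f z.1 := Measure.quasiMeasurePreserving_fst.ae hf_pos
  have hw_inv : w ∘ R =ᵐ[μ.prod ρ] w := by
    filter_upwards [hinv, hf_pos_fst, hR.quasiMeasurePreserving.ae hf_pos_fst] with z hz hfz hfRz
    simp only [w, Function.comp_apply]
    rw [← ENNReal.ofReal_mul hfRz.le, hz, ENNReal.ofReal_mul hfz.le]
  rw [prod_withDensity hf.ennreal_ofReal hg.ennreal_ofReal]
  simpa only [withDensity_congr_ae hw_inv] using measurePreserving_withDensity_comp hR hw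

theorem hmcOperator_ae_eq_mul_integral_hmcKernel (hf : Measurable f)
    (hf_pos : ∀ᵐ q ∂μ, 0 < f q) (hg : Measurable g) (hg_nonneg : 0 ≤ᵐ[ρ] g)
    (hR : MeasurePreserving R (μ.prod ρ) (μ.prod ρ))
    (hinv : ∀ᵐ z ∂μ.prod ρ, f (R z).1 * g (R z).2 = f z.1 * g z.2)
    {h : Q → ℝ} (hh : Measurable h) :
    ∀ᵐ q ∂μ, hmcOperator ρ g R h q =
      f q * ∫ y, h y / f y ∂hmcKernel (ρ.withDensity fun p => ENNReal.ofReal (g p)) R q := by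
  have hpos : ∀ᵐ z ∂μ.prod ρ, 0 < f (R z).1 :=
    hR.quasiMeasurePreserving.ae (Measure.quasiMeasurePreserving_fst.ae hf_pos)
  filter_upwards [Measure.ae_ae_of_ae_prod hinv, Measure.ae_ae_of_ae_prod hpos] with q hq hq_pos
  have hRq : Measurable fun p => (R (q, p)).1 := (hR.measurable.comp measurable_prodMk_left).fst
  rw [hmcKernel_apply hR.measurable,
    integral_map hRq.aemeasurable (hh.fun_div hf).aestronglyMeasurable,
    integral_withDensity_ofReal hg.aemeasurable hg_nonneg, ← integral_const_mul, hmcOperator]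
  refine integral_congr_ae ?_
  filter_upwards [hq, hq_pos] with p hp hp_pos
  calc
    h (R (q, p)).1 * g (R (q, p)).2
        = f (R (q, p)).1 * g (R (q, p)).2 * (h (R (q, p)).1 / f (R (q, p)).1) := by field_simp
    _ = f q * (g p • (h (R (q, p)).1 / f (R (q, p)).1)) := by rw [hp, mul_assoc, smul_eq_mul]

theorem integral_hmcOperator_sq_div (hf : Measurable f)
    (hf_pos : ∀ᵐ q ∂μ, 0 < f q) (hg : Measurable g) (hg_nonneg : 0 ≤ᵐ[ρ] g)
    (hR : MeasurePreserving R (μ.prod ρ) (μ.prod ρ))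
    (hinv : ∀ᵐ z ∂μ.prod ρ, f (R z).1 * g (R z).2 = f z.1 * g z.2)
    {h : Q → ℝ} (hh : Measurable h) :
    ∫ q, hmcOperator ρ g R h q ^ 2 / f q ∂μ =
      ∫ q, (∫ y, h y / f y ∂hmcKernel (ρ.withDensity fun p => ENNReal.ofReal (g p)) R q) ^ 2
        ∂μ.withDensity (fun q => ENNReal.ofReal (f q)) := by
  rw [integral_sq_div_eq_integral_withDensity hf.aemeasurable hf_pos]
  refine integral_congr_ae ((withDensity_absolutelyContinuous _ _).ae_le ?_)
  filter_upwards [hf_pos,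
    hmcOperator_ae_eq_mul_integral_hmcKernel hf hf_pos hg hg_nonneg hR hinv hh] with q hq hTq
  rw [hTq, mul_div_cancel_left₀ _ hq.ne']

theorem hmc_norm_equality_implies_multiple_of_target_general [SFinite μ]
    (hf : Measurable f) (hf_pos : ∀ᵐ q ∂μ, 0 < f q) (hg : Measurable g) (hg_nonneg : 0 ≤ᵐ[ρ] g)
    (hg_int : ∫ p, g p ∂ρ = 1) (hR : MeasurePreserving R (μ.prod ρ) (μ.prod ρ))
    (hinv : ∀ᵐ z ∂μ.prod ρ, f (R z).1 * g (R z).2 = f z.1 * g z.2)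
    (hcov : ∃ᶠ q in ae μ,
      μ ≪ (ρ.withDensity fun p => ENNReal.ofReal (g p)).map fun p => (R (q, p)).1)
    {h : Q → ℝ} (hh : Measurable h) (hh_L2 : Integrable (fun q => h q ^ 2 / f q) μ)
    (hnorm : ∫ q, hmcOperator ρ g R h q ^ 2 / f q ∂μ = ∫ q, h q ^ 2 / f q ∂μ) :
    ∃ α : ℝ, ∀ᵐ q ∂μ, h q = α * f q := by
  let π := μ.withDensity fun q => ENNReal.ofReal (f q)
  let ν := ρ.withDensity fun p => ENNReal.ofReal (g p)
  have : IsProbabilityMeasure ν := isProbabilityMeasure_withDensity_ofReal hg_nonneg hg_int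
  have : IsMarkovKernel (hmcKernel ν R) := isMarkovKernel_hmcKernel hR.measurable
  have hμπ : μ ≪ π := absolutelyContinuous_withDensity_ofReal hf.aemeasurable hf_pos
  have hinvariant : (hmcKernel ν R).Invariant π := invariant_hmcKernel
    (measurePreserving_prod_withDensity_of_mul_invariant hf hf_pos hg hR hinv)
  have hcov_kernel : ∃ᶠ q in ae π, π ≪ hmcKernel ν R q := by
    refine (hcov.filter_mono hμπ.ae_le).mono fun q hq => ?_
    rw [hmcKernel_apply hR.measurable]
    exact (withDensity_absolutelyContinuous _ _).trans hq
  rw [integral_hmcOperator_sq_div hf hf_pos hg hg_nonneg hR hinv hh,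
    integral_sq_div_eq_integral_withDensity hf.aemeasurable hf_pos] at hnorm
  obtain ⟨α, hα⟩ := exists_ae_eq_const_of_invariant_of_integral_sq_eq hinvariant
    ((memLp_two_div_withDensity_iff hf.aemeasurable hf_pos hh.aemeasurable).2 hh_L2) hnorm
    hcov_kernel
  refine ⟨α, ?_⟩
  filter_upwards [hμπ.ae_le hα, hf_pos] with q hq hfq
  exact (div_eq_iff hfq.ne').1 hq

end HMC

/-- If the HMC operator preserves the weighted `L²` norm of `h`,
then `h` is (a.e.) a scalar multiple of the target density `f`. -/
theorem hmc_norm_equality_implies_multiple_of_target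
    (m : ℕ) (hm : 1 ≤ m)
    (f g : EuclideanSpace ℝ (Fin m) → ℝ)
    (hf_meas : Measurable f)
    (hf_pos : ∀ᵐ q : EuclideanSpace ℝ (Fin m), 0 < f q)
    (hf_int : Integrable f)
    (hf_int_pos : 0 < ∫ q, f q)
    (hg_meas : Measurable g)
    (hg_nonneg : ∀ p, 0 ≤ g p)
    (hg_int : (∫ p, g p) = 1)
    (R : EuclideanSpace ℝ (Fin m) × EuclideanSpace ℝ (Fin m) →
         EuclideanSpace ℝ (Fin m) × EuclideanSpace ℝ (Fin m))
    (hR_bij : Function.Bijective R)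
    (hR_mp : MeasurePreserving R volume volume)
    (hinv : ∀ q p : EuclideanSpace ℝ (Fin m),
      f (R (q, p)).1 * g (R (q, p)).2 = f q * g p)
    -- Coverage property: for a.e. `q`, the push-forward under `p ↦ (R (q,p)).1` of the
    -- measure with density `g` is mutually absolutely continuous with Lebesgue measure.
    (hcov : ∀ᵐ q : EuclideanSpace ℝ (Fin m),
      (Measure.map (fun p => (R (q, p)).1)
          (volume.withDensity fun p => ENNReal.ofReal (g p))) ≪ volume ∧
      volume ≪ (Measure.map (fun p => (R (q, p)).1)
          (volume.withDensity fun p => ENNReal.ofReal (g p))))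
    (h : EuclideanSpace ℝ (Fin m) → ℝ) (hh_meas : Measurable h)
    (hh_L2 : Integrable (fun q => h q ^ 2 / f q))
    (hnorm : (∫ q, (∫ p, h (R (q, p)).1 * g (R (q, p)).2) ^ 2 / f q) =
      ∫ q, h q ^ 2 / f q) :
    ∃ α : ℝ, ∀ᵐ q : EuclideanSpace ℝ (Fin m), h q = α * f q :=
  hmc_norm_equality_implies_multiple_of_target_general hf_meas hf_pos hg_meas
    (.of_forall hg_nonneg) hg_int hR_mp (.of_forall fun z => hinv z.1 z.2)
    (hcov.frequently.mono fun _ hq => hq.2) hh_meas hh_L2 hnorm
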